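/- arXiv:1503.02118 — 7 statements merged into one kernel-verified Lean document; each statement's English description precedes it below -/
import Mathlib

section
/- Let M, N, U, V, Q : ℂ → ℂ^{n×n} be matrix-valued functions and let J be a fixed complex n×n matrix with Jᴴ = J. For a matrix-valued function X define X~(s) := (X(−conj(s)))ᴴ. Define Φ(s) := U~(s) J U(s) − V~(s) J V(s), Λ(s) := M~(s) J U(s) − N~(s) J V(s), Π(s) := M~(s) J M(s) − N~(s) J N(s), and, wherever V(s)+N(s)Q(s) is invertible, K(s) := (U(s)+M(s)Q(s)) (V(s)+N(s)Q(s))⁻¹. Then for every s ∈ ℂ such that V+NQ is invertible at both s and −conj(s), the identity K~(s) J K(s) = J holds if and only if Φ(s) + Q~(s) Λ(s) + Λ~(s) Q(s) + Q~(s) Π(s) Q(s) = 0. -/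
open Matrix

/-- The conjugate transfer matrix `X~(s) := (X(-conj s))ᴴ` of a matrix-valued
function `X : ℂ → ℂ^{n×n}`. -/
noncomputable def conjTransfer {n : ℕ} (X : ℂ → Matrix (Fin n) (Fin n) ℂ) :
    ℂ → Matrix (Fin n) (Fin n) ℂ :=
  fun s => (X (-(starRingEnd ℂ s)))ᴴ

/-- For the controller `K = (U + MQ)(V + NQ)⁻¹` given by a right
matrix fraction description, and for any `s ∈ ℂ` at which `V + NQ` is
invertible both at `s` and at `-conj s`, the `(J,J)`-unitarity identity
`K~(s) J K(s) = J` holds iff `Φ(s) + Q~(s)Λ(s) + Λ~(s)Q(s) + Q~(s)Π(s)Q(s) = 0`,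
where `Φ = U~JU - V~JV`, `Λ = M~JU - N~JV`, `Π = M~JM - N~JN`. -/
theorem jj_unitary_iff_youla_kucera_constraint (n : ℕ)
    (M N U V Q : ℂ → Matrix (Fin n) (Fin n) ℂ)
    (J : Matrix (Fin n) (Fin n) ℂ) (hJ : Jᴴ = J)
    (K Phi Lam Pim : ℂ → Matrix (Fin n) (Fin n) ℂ)
    (hK : ∀ z : ℂ, K z = (U z + M z * Q z) * (V z + N z * Q z)⁻¹)
    (hPhi : ∀ z : ℂ, Phi z = conjTransfer U z * J * U z - conjTransfer V z * J * V z)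
    (hLam : ∀ z : ℂ, Lam z = conjTransfer M z * J * U z - conjTransfer N z * J * V z)
    (hPim : ∀ z : ℂ, Pim z = conjTransfer M z * J * M z - conjTransfer N z * J * N z)
    (s : ℂ)
    (hs : IsUnit (V s + N s * Q s))
    (hs' : IsUnit (V (-(starRingEnd ℂ s)) + N (-(starRingEnd ℂ s)) * Q (-(starRingEnd ℂ s)))) :
    conjTransfer K s * J * K s = J ↔
      Phi s + conjTransfer Q s * Lam s + conjTransfer Lam s * Q s
        + conjTransfer Q s * Pim s * Q s = 0 := by
  set t := -(starRingEnd ℂ s) with ht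
  have htt : -(starRingEnd ℂ t) = s := by simp [ht]
  have key : Phi s + conjTransfer Q s * Lam s + conjTransfer Lam s * Q s
        + conjTransfer Q s * Pim s * Q s
      = (U t + M t * Q t)ᴴ * J * (U s + M s * Q s)
        - (V t + N t * Q t)ᴴ * J * (V s + N s * Q s) := by
    have hL : conjTransfer Lam s = (U t)ᴴ * J * M s - (V t)ᴴ * J * N s := by
      simp only [conjTransfer]
      rw [← ht, hLam]
      simp only [conjTransfer, htt, conjTranspose_sub, conjTranspose_mul,
        conjTranspose_conjTranspose, hJ, Matrix.mul_assoc]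
    rw [hL, hPhi, hLam, hPim]
    simp only [conjTransfer, ← ht, conjTranspose_add, conjTranspose_mul]
    noncomm_ring
  rw [key, sub_eq_zero]
  have hKs : conjTransfer K s
      = ((V t + N t * Q t)ᴴ)⁻¹ * (U t + M t * Q t)ᴴ := by
    simp only [conjTransfer]
    rw [← ht, hK, conjTranspose_mul, conjTranspose_nonsing_inv]
  rw [hKs, hK]
  have hE : IsUnit ((V t + N t * Q t)ᴴ) := hs'.star
  generalize (V t + N t * Q t)ᴴ = E at *
  generalize (U t + M t * Q t)ᴴ = B at *
  generalize V s + N s * Q s = D at *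
  generalize U s + M s * Q s = A at *
  rw [Matrix.isUnit_iff_isUnit_det] at hs hE
  constructor
  · intro h
    calc B * J * A = (E * E⁻¹) * B * J * A * (D⁻¹ * D) := by
          rw [Matrix.mul_nonsing_inv _ hE, Matrix.nonsing_inv_mul _ hs]; simp
      _ = E * (E⁻¹ * B * J * (A * D⁻¹)) * D := by simp only [Matrix.mul_assoc]
      _ = E * J * D := by rw [h]
  · intro h
    calc E⁻¹ * B * J * (A * D⁻¹) = E⁻¹ * (B * J * A) * D⁻¹ := by
          simp only [Matrix.mul_assoc]
      _ = (E⁻¹ * E) * J * (D * D⁻¹) := by rw [h]; simp only [Matrix.mul_assoc]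
      _ = J := by
          rw [Matrix.mul_nonsing_inv _ hs, Matrix.nonsing_inv_mul _ hE]; simp
end

section
/- Let M̂, N̂, Û, V̂, Q : ℂ → ℂ^{n×n} be matrix-valued functions and let J be a fixed complex n×n matrix with Jᴴ = J and J² = I. For a matrix-valued function X define X~(s) := (X(−conj(s)))ᴴ. Define Φ̂(s) := Û(s) J Û~(s) − V̂(s) J V̂~(s), Λ̂(s) := M̂(s) J Û~(s) − N̂(s) J V̂~(s), Π̂(s) := M̂(s) J M̂~(s) − N̂(s) J N̂~(s), and, wherever V̂(s)+Q(s)N̂(s) is invertible, K(s) := (V̂(s)+Q(s)N̂(s))⁻¹ (Û(s)+Q(s)M̂(s)). Then for every s ∈ ℂ such that V̂+QN̂ is invertible at both s and −conj(s), the dual (J,J)-unitarity identity K(s) J K~(s) = J holds if and only if Φ̂(s) + Q(s) Λ̂(s) + Λ̂~(s) Q~(s) + Q(s) Π̂(s) Q~(s) = 0. -/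
open Matrix

/-- For the controller `K = (V̂ + QN̂)⁻¹(Û + QM̂)` given by a left
matrix fraction description, and for any `s ∈ ℂ` at which `V̂ + QN̂` is
invertible both at `s` and at `-conj s`, the dual `(J,J)`-unitarity identity
`K(s) J K~(s) = J` holds iff
`Φ̂(s) + Q(s)Λ̂(s) + Λ̂~(s)Q~(s) + Q(s)Π̂(s)Q~(s) = 0`, where
`Φ̂ = ÛJÛ~ - V̂JV̂~`, `Λ̂ = M̂JÛ~ - N̂JV̂~`, `Π̂ = M̂JM̂~ - N̂JN̂~`. -/
theorem dual_jj_unitary_iff_dual_youla_kucera_constraint (n : ℕ)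
    (Mh Nh Uh Vh Q : ℂ → Matrix (Fin n) (Fin n) ℂ)
    (J : Matrix (Fin n) (Fin n) ℂ) (hJ : Jᴴ = J) (hJ2 : J * J = 1)
    (K Phih Lamh Pimh : ℂ → Matrix (Fin n) (Fin n) ℂ)
    (hK : ∀ z : ℂ, K z = (Vh z + Q z * Nh z)⁻¹ * (Uh z + Q z * Mh z))
    (hPhih : ∀ z : ℂ, Phih z = Uh z * J * conjTransfer Uh z - Vh z * J * conjTransfer Vh z)
    (hLamh : ∀ z : ℂ, Lamh z = Mh z * J * conjTransfer Uh z - Nh z * J * conjTransfer Vh z)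
    (hPimh : ∀ z : ℂ, Pimh z = Mh z * J * conjTransfer Mh z - Nh z * J * conjTransfer Nh z)
    (s : ℂ)
    (hs : IsUnit (Vh s + Q s * Nh s))
    (hs' : IsUnit (Vh (-(starRingEnd ℂ s)) + Q (-(starRingEnd ℂ s)) * Nh (-(starRingEnd ℂ s)))) :
    K s * J * conjTransfer K s = J ↔
      Phih s + Q s * Lamh s + conjTransfer Lamh s * conjTransfer Q s
        + Q s * Pimh s * conjTransfer Q s = 0 := by
  have htt : -(starRingEnd ℂ (-(starRingEnd ℂ s))) = s := by simp
  simp only [conjTransfer, hK, hPhih, hLamh, hPimh, htt]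
  generalize -(starRingEnd ℂ s) = t at *
  have e : Uh s * J * (Uh t)ᴴ - Vh s * J * (Vh t)ᴴ
      + Q s * (Mh s * J * (Uh t)ᴴ - Nh s * J * (Vh t)ᴴ)
      + (Mh t * J * (Uh s)ᴴ - Nh t * J * (Vh s)ᴴ)ᴴ * (Q t)ᴴ
      + Q s * (Mh s * J * (Mh t)ᴴ - Nh s * J * (Nh t)ᴴ) * (Q t)ᴴ
      = (Uh s + Q s * Mh s) * J * (Uh t + Q t * Mh t)ᴴ
        - (Vh s + Q s * Nh s) * J * (Vh t + Q t * Nh t)ᴴ := by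
    simp only [conjTranspose_add, conjTranspose_sub, conjTranspose_mul,
      conjTranspose_conjTranspose, hJ]
    noncomm_ring
  rw [e, sub_eq_zero]
  generalize Vh s + Q s * Nh s = A at *
  generalize Vh t + Q t * Nh t = B at *
  generalize Uh s + Q s * Mh s = X at *
  generalize Uh t + Q t * Mh t = Y at *
  have hA : IsUnit A.det := (Matrix.isUnit_iff_isUnit_det A).1 hs
  have hB : IsUnit B.det := (Matrix.isUnit_iff_isUnit_det B).1 hs'
  have a1 : A * A⁻¹ = 1 := Matrix.mul_nonsing_inv A hA
  have a2 : A⁻¹ * A = 1 := Matrix.nonsing_inv_mul A hA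
  have b1 : (B⁻¹)ᴴ * Bᴴ = 1 := by
    rw [← conjTranspose_mul, Matrix.mul_nonsing_inv B hB, conjTranspose_one]
  have b2 : Bᴴ * (B⁻¹)ᴴ = 1 := by
    rw [← conjTranspose_mul, Matrix.nonsing_inv_mul B hB, conjTranspose_one]
  rw [conjTranspose_mul]
  constructor
  · intro h
    calc X * J * Yᴴ = (A * A⁻¹) * (X * J * Yᴴ) * ((B⁻¹)ᴴ * Bᴴ) := by rw [a1, b1]; simp
      _ = A * (A⁻¹ * X * J * (Yᴴ * (B⁻¹)ᴴ)) * Bᴴ := by simp only [Matrix.mul_assoc]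
      _ = A * J * Bᴴ := by rw [h]
  · intro h
    calc A⁻¹ * X * J * (Yᴴ * (B⁻¹)ᴴ) = A⁻¹ * (X * J * Yᴴ) * (B⁻¹)ᴴ := by
          simp only [Matrix.mul_assoc]
      _ = (A⁻¹ * A) * J * (Bᴴ * (B⁻¹)ᴴ) := by rw [h]; simp only [Matrix.mul_assoc]
      _ = J := by rw [a2, b2]; simp
end

section
/- Let P₁₁ ∈ ℂ^{p×r}, P₁₂ ∈ ℂ^{p×n}, P₂₁ ∈ ℂ^{n×r}, P₂₂ ∈ ℂ^{n×n}, and let M, N, U, V, M̂, N̂, Û, V̂, Q ∈ ℂ^{n×n}. Assume: (i) M and M̂ are invertible and P₂₂ = N M⁻¹ = M̂⁻¹ N̂; (ii) the general Bézout identity [[V̂, −Û],[−N̂, M̂]] · [[M, U],[N, V]] = I_{2n} holds; (iii) V + NQ is invertible, and set K := (U + MQ)(V + NQ)⁻¹. Then I − P₂₂K is invertible with (I − P₂₂K)⁻¹ = (V + NQ)M̂, and the lower linear fractional transformation satisfies P₁₁ + P₁₂ K (I − P₂₂K)⁻¹ P₂₁ = (P₁₁ + P₁₂ U M̂ P₂₁)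 + (P₁₂ M) Q (M̂ P₂₁), i.e. the closed-loop matrix equals T₀ + T₁ Q T₂ with T₀ := P₁₁ + P₁₂ U M̂ P₂₁, T₁ := P₁₂ M, T₂ := M̂ P₂₁. -/
open Matrix

/-- Under a doubly coprime factorization `P₂₂ = NM⁻¹ = M̂⁻¹N̂`
satisfying the general Bézout identity, for the controller
`K = (U + MQ)(V + NQ)⁻¹` the matrix `I - P₂₂K` is invertible with inverse
`(V + NQ)M̂`, and the lower LFT of the plant and controller equals
`T₀ + T₁ Q T₂` with `T₀ = P₁₁ + P₁₂UM̂P₂₁`, `T₁ = P₁₂M`, `T₂ = M̂P₂₁`. -/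
theorem closed_loop_affine_in_youla_parameter (p r n : ℕ)
    (P11 : Matrix (Fin p) (Fin r) ℂ) (P12 : Matrix (Fin p) (Fin n) ℂ)
    (P21 : Matrix (Fin n) (Fin r) ℂ)
    (P22 M N U V Mh Nh Uh Vh Q : Matrix (Fin n) (Fin n) ℂ)
    (hM : IsUnit M) (hMh : IsUnit Mh)
    (hPr : P22 = N * M⁻¹) (hPl : P22 = Mh⁻¹ * Nh)
    (hBezout : Matrix.fromBlocks Vh (-Uh) (-Nh) Mh *
        Matrix.fromBlocks M U N V = 1)
    (hVNQ : IsUnit (V + N * Q))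
    (K : Matrix (Fin n) (Fin n) ℂ)
    (hK : K = (U + M * Q) * (V + N * Q)⁻¹) :
    IsUnit (1 - P22 * K)
      ∧ (1 - P22 * K)⁻¹ = (V + N * Q) * Mh
      ∧ P11 + P12 * K * (1 - P22 * K)⁻¹ * P21
          = (P11 + P12 * U * Mh * P21) + (P12 * M) * Q * (Mh * P21) := by
  rw [Matrix.fromBlocks_multiply, ← Matrix.fromBlocks_one, Matrix.fromBlocks_inj] at hBezout
  obtain ⟨-, -, h21, h22⟩ := hBezout
  have hKW : K * (V + N * Q) = U + M * Q := by
    rw [hK, Matrix.mul_assoc,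
      Matrix.nonsing_inv_mul _ ((Matrix.isUnit_iff_isUnit_det _).1 hVNQ), Matrix.mul_one]
  have hMP : Mh * P22 = Nh := by
    rw [hPl, ← Matrix.mul_assoc,
      Matrix.mul_nonsing_inv _ ((Matrix.isUnit_iff_isUnit_det _).1 hMh), Matrix.one_mul]
  have h1 : Mh * ((1 - P22 * K) * (V + N * Q)) = 1 := by
    calc Mh * ((1 - P22 * K) * (V + N * Q))
        = Mh * (V + N * Q) - (Mh * P22) * (K * (V + N * Q)) := by noncomm_ring
      _ = (-Nh * U + Mh * V) + (-Nh * M + Mh * N) * Q := by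
          rw [hKW, hMP]; noncomm_ring
      _ = 1 := by rw [h21, h22]; simp
  have h2 : (1 - P22 * K) * ((V + N * Q) * Mh) = 1 := by
    rw [← Matrix.mul_assoc]; exact mul_eq_one_comm.1 h1
  have h3 : (1 - P22 * K)⁻¹ = (V + N * Q) * Mh := Matrix.inv_eq_right_inv h2
  refine ⟨IsUnit.of_mul_eq_one _ h2, h3, ?_⟩
  have h4 : P12 * K * ((V + N * Q) * Mh) = P12 * ((U + M * Q) * Mh) := by
    rw [← hKW]; simp only [Matrix.mul_assoc]
  rw [h3, h4]
  simp only [Matrix.mul_add, Matrix.add_mul, Matrix.mul_assoc, add_assoc]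
end

section
/- Let F := RatFunc ℂ be the field of complex rational functions and RH∞ ⊂ F the subring of proper stable rational functions (f ∈ RH∞ iff f = 0, or every complex root z of the denominator of f satisfies Re z < 0 and the degree of the numerator of f is at most the degree of its denominator). Let P be an n×n matrix over F admitting a doubly coprime factorization: matrices M, N, U, V, M̂, N̂, Û, V̂ over F with all entries in RH∞, M and M̂ invertible over F, P = N M⁻¹ = M̂⁻¹ N̂, and [[V̂, −Û],[−N̂, M̂]] · [[M, U],[N, V]] = I_{2n}. Then an n×n matrix K over F internally stabilizes P — meaning the 2n×2n block matrix [[I, −K],[−P, I]] is invertible over F and all entries of its inverse lie in RH∞ — if and only if there exists an n×n matrix Q with all entries in RH∞ such that V + NQ is invertible over F and K = (U + MQ)(V + NQ)⁻¹. -/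
open Matrix Polynomial

/-- A rational function belongs to `RH∞` (proper stable rational functions):
it is zero, or all roots of its denominator lie in the open left half-plane
and its numerator degree does not exceed its denominator degree. -/
def IsRHInf (f : RatFunc ℂ) : Prop :=
  f = 0 ∨ ((∀ z : ℂ, f.denom.IsRoot z → z.re < 0) ∧ f.num.degree ≤ f.denom.degree)

/-- A controller `K` internally stabilizes the plant `P` (both `n×n` over the
field of rational functions) if the block matrix `[[I, -K],[-P, I]]` is
invertible with all entries of its inverse in `RH∞`. -/
def InternallyStabilizes {n : ℕ}
    (P K : Matrix (Fin n) (Fin n) (RatFunc ℂ)) : Prop :=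
  IsUnit (Matrix.fromBlocks 1 (-K) (-P) 1)
    ∧ ∀ i j, IsRHInf ((Matrix.fromBlocks 1 (-K) (-P) 1)⁻¹ i j)

theorem isRHInf_iff (f : RatFunc ℂ) : IsRHInf f ↔
    ∃ p q : ℂ[X], q ≠ 0 ∧ (∀ z : ℂ, q.IsRoot z → z.re < 0) ∧ p.degree ≤ q.degree ∧
      f = algebraMap ℂ[X] (RatFunc ℂ) p / algebraMap ℂ[X] (RatFunc ℂ) q := by
  constructor
  · rintro (rfl | ⟨h1, h2⟩)
    · exact ⟨0, 1, one_ne_zero, by simp, by simp, by simp⟩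
    · exact ⟨f.num, f.denom, f.denom_ne_zero, h1, h2, (RatFunc.num_div_denom f).symm⟩
  · rintro ⟨p, q, hq, hr, hd, rfl⟩
    right
    refine ⟨fun z hz => hr z (hz.dvd (RatFunc.denom_div_dvd p q)), ?_⟩
    have h : (algebraMap ℂ[X] (RatFunc ℂ) p / algebraMap ℂ[X] (RatFunc ℂ) q).num * q =
        p * (algebraMap ℂ[X] (RatFunc ℂ) p / algebraMap ℂ[X] (RatFunc ℂ) q).denom := by
      exact (RatFunc.num_mul_eq_mul_denom_iff hq).2 rfl
    generalize RatFunc.num (algebraMap ℂ[X] (RatFunc ℂ) p / algebraMap ℂ[X] (RatFunc ℂ) q) = a at h ⊢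
    have hb : RatFunc.denom (algebraMap ℂ[X] (RatFunc ℂ) p / algebraMap ℂ[X] (RatFunc ℂ) q) ≠ 0 :=
      RatFunc.denom_ne_zero _
    generalize RatFunc.denom (algebraMap ℂ[X] (RatFunc ℂ) p / algebraMap ℂ[X] (RatFunc ℂ) q) = b at h hb ⊢
    by_cases ha : a = 0
    · simp [ha]
    have hp : p ≠ 0 := by
      rintro rfl
      simp_all
    have h' := congrArg natDegree h
    rw [natDegree_mul ha hq, natDegree_mul hp hb] at h'
    rw [degree_eq_natDegree hp, degree_eq_natDegree hq] at hd
    rw [degree_eq_natDegree ha, degree_eq_natDegree hb]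
    norm_cast at hd ⊢
    omega

theorem IsRHInf.mul' {f g : RatFunc ℂ} (hf : IsRHInf f) (hg : IsRHInf g) : IsRHInf (f * g) := by
  rw [isRHInf_iff] at *
  obtain ⟨p, q, hq, hr, hd, rfl⟩ := hf
  obtain ⟨p', q', hq', hr', hd', rfl⟩ := hg
  refine ⟨p * p', q * q', mul_ne_zero hq hq', fun z hz => ?_, ?_, ?_⟩
  · rcases root_mul.1 hz with h | h
    exacts [hr z h, hr' z h]
  · rw [degree_mul, degree_mul]
    gcongr
  · rw [map_mul, map_mul, div_mul_div_comm]

theorem IsRHInf.add' {f g : RatFunc ℂ} (hf : IsRHInf f) (hg : IsRHInf g) : IsRHInf (f + g) := by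
  rw [isRHInf_iff] at *
  obtain ⟨p, q, hq, hr, hd, rfl⟩ := hf
  obtain ⟨p', q', hq', hr', hd', rfl⟩ := hg
  refine ⟨p * q' + q * p', q * q', mul_ne_zero hq hq', fun z hz => ?_, ?_, ?_⟩
  · rcases root_mul.1 hz with h | h
    exacts [hr z h, hr' z h]
  · refine (degree_add_le _ _).trans (max_le ?_ ?_) <;> rw [degree_mul, degree_mul] <;> gcongr
  · rw [map_add, map_mul, map_mul, map_mul, div_add_div]
    · exact RatFunc.algebraMap_ne_zero hq
    · exact RatFunc.algebraMap_ne_zero hq'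

theorem IsRHInf.neg' {f : RatFunc ℂ} (hf : IsRHInf f) : IsRHInf (-f) := by
  rw [isRHInf_iff] at *
  obtain ⟨p, q, hq, hr, hd, rfl⟩ := hf
  exact ⟨-p, q, hq, hr, by rwa [degree_neg], by rw [map_neg]; exact (neg_div _ _).symm⟩

theorem isRHInf_zero : IsRHInf 0 := Or.inl rfl

theorem isRHInf_one : IsRHInf 1 := by
  rw [isRHInf_iff]
  exact ⟨1, 1, one_ne_zero, by simp, le_rfl, by simp⟩

/-- all entries stable -/
def StM {a b : Type} (A : Matrix a b (RatFunc ℂ)) : Prop := ∀ i j, IsRHInf (A i j)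

theorem StM.mul {a b c : Type} [Fintype b] {A : Matrix a b (RatFunc ℂ)}
    {B : Matrix b c (RatFunc ℂ)} (hA : StM A) (hB : StM B) : StM (A * B) := by
  intro i j
  rw [Matrix.mul_apply]
  exact Finset.sum_induction _ IsRHInf (fun _ _ => IsRHInf.add') isRHInf_zero
    (fun k _ => (hA i k).mul' (hB k j))

theorem StM.add {a b : Type} {A B : Matrix a b (RatFunc ℂ)}
    (hA : StM A) (hB : StM B) : StM (A + B) := fun i j => (hA i j).add' (hB i j)

theorem StM.neg {a b : Type} {A : Matrix a b (RatFunc ℂ)}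
    (hA : StM A) : StM (-A) := fun i j => (hA i j).neg'

theorem StM.sub {a b : Type} {A B : Matrix a b (RatFunc ℂ)}
    (hA : StM A) (hB : StM B) : StM (A - B) := by
  rw [sub_eq_add_neg]; exact hA.add hB.neg

theorem StM.one {a : Type} [DecidableEq a] : StM (1 : Matrix a a (RatFunc ℂ)) := by
  intro i j
  rw [Matrix.one_apply]
  split_ifs
  exacts [isRHInf_one, isRHInf_zero]

theorem StM.blocks {a b c d : Type} {A : Matrix a c (RatFunc ℂ)} {B : Matrix a d (RatFunc ℂ)}
    {C : Matrix b c (RatFunc ℂ)} {D : Matrix b d (RatFunc ℂ)}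
    (hA : StM A) (hB : StM B) (hC : StM C) (hD : StM D) : StM (Matrix.fromBlocks A B C D) := by
  rintro (i | i) (j | j)
  exacts [hA i j, hB i j, hC i j, hD i j]

/-- Youla–Kučera parameterization. Given a doubly coprime
factorization of `P` over `RH∞` satisfying the general Bézout identity, a
controller `K` internally stabilizes `P` iff `K = (U + MQ)(V + NQ)⁻¹` for some
matrix `Q` over `RH∞` with `V + NQ` invertible. -/
theorem youla_kucera_parameterization (n : ℕ)
    (P M N U V Mh Nh Uh Vh : Matrix (Fin n) (Fin n) (RatFunc ℂ))
    (hMs : ∀ i j, IsRHInf (M i j)) (hNs : ∀ i j, IsRHInf (N i j))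
    (hUs : ∀ i j, IsRHInf (U i j)) (hVs : ∀ i j, IsRHInf (V i j))
    (hMhs : ∀ i j, IsRHInf (Mh i j)) (hNhs : ∀ i j, IsRHInf (Nh i j))
    (hUhs : ∀ i j, IsRHInf (Uh i j)) (hVhs : ∀ i j, IsRHInf (Vh i j))
    (hM : IsUnit M) (hMh : IsUnit Mh)
    (hPr : P = N * M⁻¹) (hPl : P = Mh⁻¹ * Nh)
    (hBezout : Matrix.fromBlocks Vh (-Uh) (-Nh) Mh *
        Matrix.fromBlocks M U N V = 1)
    (K : Matrix (Fin n) (Fin n) (RatFunc ℂ)) :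
    InternallyStabilizes P K ↔
      ∃ Q : Matrix (Fin n) (Fin n) (RatFunc ℂ),
        (∀ i j, IsRHInf (Q i j)) ∧ IsUnit (V + N * Q)
          ∧ K = (U + M * Q) * (V + N * Q)⁻¹ := by
  have hB2 := mul_eq_one_comm.1 hBezout
  rw [Matrix.fromBlocks_multiply, ← Matrix.fromBlocks_one, Matrix.fromBlocks_inj] at hBezout hB2
  obtain ⟨b11, b12, b21, b22⟩ := hBezout
  obtain ⟨c11, c12, c21, c22⟩ := hB2
  have hMd := (Matrix.isUnit_iff_isUnit_det _).1 hM
  have hMhd := (Matrix.isUnit_iff_isUnit_det _).1 hMh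
  have hPM : P * M = N := by rw [hPr, Matrix.mul_assoc, Matrix.nonsing_inv_mul _ hMd, Matrix.mul_one]
  have hMP : Mh * P = Nh := by
    rw [hPl, ← Matrix.mul_assoc, Matrix.mul_nonsing_inv _ hMhd, Matrix.one_mul]
  clear hPr hPl
  constructor
  · rintro ⟨hu, hs⟩
    have hT := Matrix.mul_nonsing_inv _ ((Matrix.isUnit_iff_isUnit_det _).1 hu)
    generalize (Matrix.fromBlocks 1 (-K) (-P) 1)⁻¹ = S at hs hT
    have s11 : StM S.toBlocks₁₁ := fun i j => hs _ _
    have s12 : StM S.toBlocks₁₂ := fun i j => hs _ _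
    have s21 : StM S.toBlocks₂₁ := fun i j => hs _ _
    have s22 : StM S.toBlocks₂₂ := fun i j => hs _ _
    rw [← Matrix.fromBlocks_toBlocks S, Matrix.fromBlocks_multiply, ← Matrix.fromBlocks_one,
      Matrix.fromBlocks_inj] at hT
    generalize S.toBlocks₁₁ = A at *
    generalize S.toBlocks₁₂ = B at *
    generalize S.toBlocks₂₁ = C at *
    generalize S.toBlocks₂₂ = D at *
    obtain ⟨t11, t12, t21, t22⟩ := hT
    have e11 : A = 1 + K * C := by rw [← t11]; noncomm_ring
    have e12 : B = K * D := by rw [← sub_eq_zero, ← t12]; noncomm_ring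
    have e21 : C - P * A = 0 := by rw [← t21]; noncomm_ring
    have e22 : D - P * B = 1 := by rw [← t22]; noncomm_ring
    obtain ⟨X, hX⟩ : ∃ X, X = B * V - (A - 1) * U := ⟨_, rfl⟩
    obtain ⟨Y, hY⟩ : ∃ Y, Y = D * V - C * U := ⟨_, rfl⟩
    have sX : StM X := hX ▸ (s12.mul hVs).sub ((s11.sub .one).mul hUs)
    have sY : StM Y := hY ▸ (s22.mul hVs).sub (s21.mul hUs)
    have hXY : X = K * Y := by rw [hX, hY, e11, e12]; noncomm_ring
    have hone : -Nh * X + Mh * Y = 1 := by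
      have : -Nh * X + Mh * Y = Mh * ((D - P * B) * V - (C - P * A) * U - P * U) := by
        rw [← hMP, hX, hY]; noncomm_ring
      rw [this, e21, e22]
      refine Eq.trans ?_ b22
      rw [← hMP]; noncomm_ring
    obtain ⟨Q, hQ⟩ : ∃ Q, Q = Vh * X + -Uh * Y := ⟨_, rfl⟩
    have hXQ : U + M * Q = X := by
      calc U + M * Q = U * (-Nh * X + Mh * Y) + M * (Vh * X + -Uh * Y) := by
            rw [hone, hQ, Matrix.mul_one]
        _ = (M * Vh + U * -Nh) * X + (M * -Uh + U * Mh) * Y := by noncomm_ring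
        _ = X := by rw [c11, c12]; simp
    have hYQ : V + N * Q = Y := by
      calc V + N * Q = V * (-Nh * X + Mh * Y) + N * (Vh * X + -Uh * Y) := by
            rw [hone, hQ, Matrix.mul_one]
        _ = (N * Vh + V * -Nh) * X + (N * -Uh + V * Mh) * Y := by noncomm_ring
        _ = Y := by rw [c21, c22]; simp
    have hYu : IsUnit Y := by
      refine IsUnit.of_mul_eq_one_right (-Nh * K + Mh) ?_
      rw [← hone, hXY]; noncomm_ring
    refine ⟨Q, ?_, ?_, ?_⟩
    · exact hQ ▸ (StM.mul hVhs sX).add ((StM.neg hUhs).mul sY)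
    · rwa [hYQ]
    · rw [hYQ, hXQ, hXY, Matrix.mul_assoc,
        Matrix.mul_nonsing_inv _ ((Matrix.isUnit_iff_isUnit_det _).1 hYu), Matrix.mul_one]
  · rintro ⟨Q, hQ, hYu, hK⟩
    have hYd := (Matrix.isUnit_iff_isUnit_det _).1 hYu
    have hKY : K * (V + N * Q) = U + M * Q := by
      rw [hK, Matrix.mul_assoc, Matrix.nonsing_inv_mul _ hYd, Matrix.mul_one]
    -- the inverse: diag(M, Y) * [[1, Q],[0,1]] stuff
    have key : Matrix.fromBlocks 1 (-K) (-P) 1 *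
        (Matrix.fromBlocks (M * (Vh + Q * Nh)) (M * (Uh + Q * Mh))
          ((V + N * Q) * Nh) ((V + N * Q) * Mh)) = 1 := by
      rw [Matrix.fromBlocks_multiply, ← Matrix.fromBlocks_one, Matrix.fromBlocks_inj]
      refine ⟨?_, ?_, ?_, ?_⟩
      · calc _ = M * (Vh + Q * Nh) - (K * (V + N * Q)) * Nh := by noncomm_ring
          _ = M * Vh + U * -Nh := by rw [hKY]; noncomm_ring
          _ = 1 := c11
      · calc _ = M * (Uh + Q * Mh) - (K * (V + N * Q)) * Mh := by noncomm_ring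
          _ = -(M * -Uh + U * Mh) := by rw [hKY]; noncomm_ring
          _ = 0 := by rw [c12, neg_zero]
      · calc _ = -((P * M) * (Vh + Q * Nh)) + (V + N * Q) * Nh := by noncomm_ring
          _ = -(N * Vh + V * -Nh) := by rw [hPM]; noncomm_ring
          _ = 0 := by rw [c21, neg_zero]
      · calc _ = -((P * M) * (Uh + Q * Mh)) + (V + N * Q) * Mh := by noncomm_ring
          _ = N * -Uh + V * Mh := by rw [hPM]; noncomm_ring
          _ = 1 := c22
    refine ⟨IsUnit.of_mul_eq_one _ key, ?_⟩
    rw [Matrix.inv_eq_right_inv key]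
    have sY : StM (V + N * Q) := StM.add hVs (StM.mul hNs hQ)
    exact StM.blocks (StM.mul hMs (StM.add hVhs (StM.mul hQ hNhs)))
      (StM.mul hMs (StM.add hUhs (StM.mul hQ hMhs))) (sY.mul hNhs) (sY.mul hMhs)
end

section
/- Let A ∈ ℂ^{k×k}, B₂ ∈ ℂ^{k×n}, C₂ ∈ ℂ^{n×k}, D₂₂ ∈ ℂ^{n×n}, F ∈ ℂ^{n×k}, L ∈ ℂ^{k×n}. For every s ∈ ℂ such that both sI − (A + B₂F) and sI − (A + LC₂) are invertible, define: M(s) := I + F(sI − A − B₂F)⁻¹B₂, U(s) := −F(sI − A − B₂F)⁻¹L, N(s) := D₂₂ + (C₂ + D₂₂F)(sI − A − B₂F)⁻¹B₂, V(s) := I − (C₂ + D₂₂F)(sI − A − B₂F)⁻¹L, V̂(s) := I − F(sI − A − LC₂)⁻¹(B₂ + LD₂₂), Û(s) := −F(sI − A − LC₂)⁻¹L, N̂(s) := D₂₂ + C₂(sI − A − LC₂)⁻¹(B₂ + LD₂₂), M̂(s) := I + C₂(sI − A − LC₂)⁻¹L. Then the general Bézout identity holds at every such s: [[V̂(s), −Û(s)],[−N̂(s),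 M̂(s)]] · [[M(s), U(s)],[N(s), V(s)]] = I_{2n}. -/
open Matrix

/-- The state-space formulas for a doubly coprime factorization
satisfy the general Bézout identity
`[[V̂(s), -Û(s)],[-N̂(s), M̂(s)]]·[[M(s), U(s)],[N(s), V(s)]] = I` at every
`s ∈ ℂ` where `sI - (A + B₂F)` and `sI - (A + LC₂)` are invertible. -/
theorem state_space_bezout_identity (k n : ℕ)
    (A : Matrix (Fin k) (Fin k) ℂ) (B2 : Matrix (Fin k) (Fin n) ℂ)
    (C2 : Matrix (Fin n) (Fin k) ℂ) (D22 : Matrix (Fin n) (Fin n) ℂ)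
    (F : Matrix (Fin n) (Fin k) ℂ) (L : Matrix (Fin k) (Fin n) ℂ)
    (s : ℂ)
    (hF : IsUnit (s • (1 : Matrix (Fin k) (Fin k) ℂ) - (A + B2 * F)))
    (hL : IsUnit (s • (1 : Matrix (Fin k) (Fin k) ℂ) - (A + L * C2)))
    (Ms Us Ns Vs Vhs Uhs Nhs Mhs : Matrix (Fin n) (Fin n) ℂ)
    (hMs : Ms = 1 + F * (s • (1 : Matrix (Fin k) (Fin k) ℂ) - A - B2 * F)⁻¹ * B2)
    (hUs : Us = -(F * (s • (1 : Matrix (Fin k) (Fin k) ℂ) - A - B2 * F)⁻¹ * L))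
    (hNs : Ns = D22 + (C2 + D22 * F) *
        (s • (1 : Matrix (Fin k) (Fin k) ℂ) - A - B2 * F)⁻¹ * B2)
    (hVs : Vs = 1 - (C2 + D22 * F) *
        (s • (1 : Matrix (Fin k) (Fin k) ℂ) - A - B2 * F)⁻¹ * L)
    (hVhs : Vhs = 1 - F *
        (s • (1 : Matrix (Fin k) (Fin k) ℂ) - A - L * C2)⁻¹ * (B2 + L * D22))
    (hUhs : Uhs = -(F * (s • (1 : Matrix (Fin k) (Fin k) ℂ) - A - L * C2)⁻¹ * L))
    (hNhs : Nhs = D22 + C2 *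
        (s • (1 : Matrix (Fin k) (Fin k) ℂ) - A - L * C2)⁻¹ * (B2 + L * D22))
    (hMhs : Mhs = 1 + C2 *
        (s • (1 : Matrix (Fin k) (Fin k) ℂ) - A - L * C2)⁻¹ * L) :
    Matrix.fromBlocks Vhs (-Uhs) (-Nhs) Mhs *
        Matrix.fromBlocks Ms Us Ns Vs = 1 := by
  rw [← sub_sub] at hF hL
  have key : ∀ Z : Matrix (Fin k) (Fin n) ℂ,
      (s • (1 : Matrix (Fin k) (Fin k) ℂ) - A - L * C2)⁻¹ * (B2 * (F *
        ((s • (1 : Matrix (Fin k) (Fin k) ℂ) - A - B2 * F)⁻¹ * Z))) =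
      (s • (1 : Matrix (Fin k) (Fin k) ℂ) - A - B2 * F)⁻¹ * Z
        - (s • (1 : Matrix (Fin k) (Fin k) ℂ) - A - L * C2)⁻¹ * Z
        + (s • (1 : Matrix (Fin k) (Fin k) ℂ) - A - L * C2)⁻¹ * (L * (C2 *
        ((s • (1 : Matrix (Fin k) (Fin k) ℂ) - A - B2 * F)⁻¹ * Z))) := by
    intro Z
    have h1 := Matrix.mul_nonsing_inv _ ((Matrix.isUnit_iff_isUnit_det _).1 hF)
    have h2 := Matrix.nonsing_inv_mul _ ((Matrix.isUnit_iff_isUnit_det _).1 hL)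
    have hd : B2 * F = (s • (1 : Matrix (Fin k) (Fin k) ℂ) - A - L * C2)
        - (s • (1 : Matrix (Fin k) (Fin k) ℂ) - A - B2 * F) + L * C2 := by abel
    generalize hP : s • (1 : Matrix (Fin k) (Fin k) ℂ) - A - B2 * F = P at *
    generalize hQ : s • (1 : Matrix (Fin k) (Fin k) ℂ) - A - L * C2 = Q at *
    have e : Q⁻¹ * (B2 * (F * (P⁻¹ * Z))) = Q⁻¹ * (B2 * F) * P⁻¹ * Z := by
      simp only [Matrix.mul_assoc]
    have e1 : Q⁻¹ * P * P⁻¹ = Q⁻¹ := by rw [Matrix.mul_assoc, h1, Matrix.mul_one]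
    rw [e, hd]
    simp only [Matrix.mul_add, Matrix.mul_sub, Matrix.add_mul, Matrix.sub_mul, h2, e1,
      Matrix.one_mul]
    simp only [Matrix.mul_assoc]
  generalize (s • (1 : Matrix (Fin k) (Fin k) ℂ) - A - B2 * F)⁻¹ = X at *
  generalize (s • (1 : Matrix (Fin k) (Fin k) ℂ) - A - L * C2)⁻¹ = Y at *
  subst hMs hUs hNs hVs hVhs hUhs hNhs hMhs
  rw [Matrix.fromBlocks_multiply, ← Matrix.fromBlocks_one]
  congr 1 <;>
  · simp only [Matrix.mul_add, Matrix.mul_sub, Matrix.add_mul, Matrix.sub_mul, Matrix.one_mul,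
      Matrix.mul_one, Matrix.neg_mul, Matrix.mul_neg, neg_neg, Matrix.mul_assoc, key]
    abel
end

section
/- Let A ∈ ℂ^{k×k}, B₂ ∈ ℂ^{k×n}, C₂ ∈ ℂ^{n×k}, D₂₂ ∈ ℂ^{n×n}, F ∈ ℂ^{n×k}. For every s ∈ ℂ such that both sI − A and sI − (A + B₂F) are invertible, the matrix M(s) := I + F(sI − A − B₂F)⁻¹B₂ is invertible with inverse M(s)⁻¹ = I − F(sI − A)⁻¹B₂, and with N(s) := D₂₂ + (C₂ + D₂₂F)(sI − A − B₂F)⁻¹B₂ one has N(s) M(s)⁻¹ = C₂(sI − A)⁻¹B₂ + D₂₂, i.e. (N, M) is a right factorization of the plant transfer function P₂₂(s) = C₂(sI − A)⁻¹B₂ + D₂₂. -/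
open Matrix

/-- For every `s` at which `sI - A` and `sI - (A + B₂F)` are
invertible, `M(s) = I + F(sI - A - B₂F)⁻¹B₂` is invertible with inverse
`I - F(sI - A)⁻¹B₂`, and with `N(s) = D₂₂ + (C₂ + D₂₂F)(sI - A - B₂F)⁻¹B₂` one
has `N(s)M(s)⁻¹ = C₂(sI - A)⁻¹B₂ + D₂₂`, i.e. `(N, M)` is a right
factorization of the plant transfer function `P₂₂`. -/
theorem right_factorization_of_plant (k n : ℕ)
    (A : Matrix (Fin k) (Fin k) ℂ) (B2 : Matrix (Fin k) (Fin n) ℂ)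
    (C2 : Matrix (Fin n) (Fin k) ℂ) (D22 : Matrix (Fin n) (Fin n) ℂ)
    (F : Matrix (Fin n) (Fin k) ℂ)
    (s : ℂ)
    (hA : IsUnit (s • (1 : Matrix (Fin k) (Fin k) ℂ) - A))
    (hABF : IsUnit (s • (1 : Matrix (Fin k) (Fin k) ℂ) - (A + B2 * F)))
    (Ms Ns : Matrix (Fin n) (Fin n) ℂ)
    (hMs : Ms = 1 + F * (s • (1 : Matrix (Fin k) (Fin k) ℂ) - A - B2 * F)⁻¹ * B2)
    (hNs : Ns = D22 + (C2 + D22 * F) *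
        (s • (1 : Matrix (Fin k) (Fin k) ℂ) - A - B2 * F)⁻¹ * B2) :
    IsUnit Ms
      ∧ Ms⁻¹ = 1 - F * (s • (1 : Matrix (Fin k) (Fin k) ℂ) - A)⁻¹ * B2
      ∧ Ns * Ms⁻¹ = C2 * (s • (1 : Matrix (Fin k) (Fin k) ℂ) - A)⁻¹ * B2 + D22 := by
  rw [← sub_sub] at hABF
  generalize hP : s • (1 : Matrix (Fin k) (Fin k) ℂ) - A = P at *
  have hX : P * P⁻¹ = 1 := Matrix.mul_nonsing_inv _ ((Matrix.isUnit_iff_isUnit_det _).1 hA)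
  have hY : (P - B2 * F)⁻¹ * (P - B2 * F) = 1 :=
    Matrix.nonsing_inv_mul _ ((Matrix.isUnit_iff_isUnit_det _).1 hABF)
  generalize P⁻¹ = X at *
  generalize (P - B2 * F)⁻¹ = Y at *
  have key : Y * (B2 * F) * X = Y - X := by
    have h1 : Y * (B2 * F) = Y * P - 1 := by
      rw [← hY, Matrix.mul_sub]; abel
    rw [h1, Matrix.sub_mul, Matrix.mul_assoc, hX, Matrix.mul_one, Matrix.one_mul]
  have key2 : Y * (B2 * (F * (X * B2))) = Y * B2 - X * B2 := by
    rw [← Matrix.sub_mul, ← key]; simp only [Matrix.mul_assoc]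
  have hM : Ms * (1 - F * X * B2) = 1 := by
    rw [hMs]
    simp only [Matrix.mul_sub, Matrix.add_mul, Matrix.mul_one, Matrix.one_mul,
      Matrix.mul_assoc, key2]
    abel
  have hinv : Ms⁻¹ = 1 - F * X * B2 := Matrix.inv_eq_right_inv hM
  refine ⟨IsUnit.of_mul_eq_one _ hM, hinv, ?_⟩
  rw [hinv, hNs]
  simp only [Matrix.mul_sub, Matrix.add_mul, Matrix.mul_one,
    Matrix.mul_assoc, key2]
  abel
end

section
/- Let A ∈ ℂ^{k×k}, B₂ ∈ ℂ^{k×n}, C₂ ∈ ℂ^{n×k}, D₂₂ ∈ ℂ^{n×n}, L ∈ ℂ^{k×n}. For every s ∈ ℂ such that both sI − A and sI − (A + LC₂) are invertible, the matrix M̂(s) := I + C₂(sI − A − LC₂)⁻¹L is invertible with inverse M̂(s)⁻¹ = I − C₂(sI − A)⁻¹L, and with N̂(s) := D₂₂ + C₂(sI − A − LC₂)⁻¹(B₂ + LD₂₂) one has M̂(s)⁻¹ N̂(s) = C₂(sI − A)⁻¹B₂ + D₂₂, i.e. (N̂, M̂) is a left factorization of the plant transfer function P₂₂(s) = C₂(sI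 − A)⁻¹B₂ + D₂₂. -/
open Matrix

/-- For every `s` at which `sI - A` and `sI - (A + LC₂)` are
invertible, `M̂(s) = I + C₂(sI - A - LC₂)⁻¹L` is invertible with inverse
`I - C₂(sI - A)⁻¹L`, and with `N̂(s) = D₂₂ + C₂(sI - A - LC₂)⁻¹(B₂ + LD₂₂)`
one has `M̂(s)⁻¹N̂(s) = C₂(sI - A)⁻¹B₂ + D₂₂`, i.e. `(N̂, M̂)` is a left
factorization of the plant transfer function `P₂₂`. -/
theorem left_factorization_of_plant (k n : ℕ)
    (A : Matrix (Fin k) (Fin k) ℂ) (B2 : Matrix (Fin k) (Fin n) ℂ)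
    (C2 : Matrix (Fin n) (Fin k) ℂ) (D22 : Matrix (Fin n) (Fin n) ℂ)
    (L : Matrix (Fin k) (Fin n) ℂ)
    (s : ℂ)
    (hA : IsUnit (s • (1 : Matrix (Fin k) (Fin k) ℂ) - A))
    (hALC : IsUnit (s • (1 : Matrix (Fin k) (Fin k) ℂ) - (A + L * C2)))
    (Mhs Nhs : Matrix (Fin n) (Fin n) ℂ)
    (hMhs : Mhs = 1 + C2 * (s • (1 : Matrix (Fin k) (Fin k) ℂ) - A - L * C2)⁻¹ * L)
    (hNhs : Nhs = D22 + C2 *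
        (s • (1 : Matrix (Fin k) (Fin k) ℂ) - A - L * C2)⁻¹ * (B2 + L * D22)) :
    IsUnit Mhs
      ∧ Mhs⁻¹ = 1 - C2 * (s • (1 : Matrix (Fin k) (Fin k) ℂ) - A)⁻¹ * L
      ∧ Mhs⁻¹ * Nhs = C2 * (s • (1 : Matrix (Fin k) (Fin k) ℂ) - A)⁻¹ * B2 + D22 := by
  rw [← sub_sub] at hALC
  generalize s • (1 : Matrix (Fin k) (Fin k) ℂ) - A = P at *
  have h1 : P⁻¹ * P = 1 := Matrix.nonsing_inv_mul _ ((Matrix.isUnit_iff_isUnit_det _).1 hA)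
  have h2 : (P - L * C2) * (P - L * C2)⁻¹ = 1 :=
    Matrix.mul_nonsing_inv _ ((Matrix.isUnit_iff_isUnit_det _).1 hALC)
  generalize (P - L * C2)⁻¹ = Y at *
  generalize P⁻¹ = X at *
  have hK : X * L * C2 * Y = Y - X := by
    have e : X * ((P - L * C2) * Y) = X * P * Y - X * L * C2 * Y := by
      simp only [Matrix.mul_sub, Matrix.sub_mul, Matrix.mul_assoc]
    rw [h2, h1, Matrix.mul_one, Matrix.one_mul] at e
    exact (sub_eq_iff_eq_add.2 (by rw [add_comm]; exact sub_eq_iff_eq_add.1 e.symm)).symm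
  have hC : (1 - C2 * X * L) * (C2 * Y) = C2 * X := by
    have e : (1 - C2 * X * L) * (C2 * Y) = C2 * Y - C2 * (X * L * C2 * Y) := by
      simp only [Matrix.sub_mul, Matrix.one_mul, Matrix.mul_assoc]
    rw [e, hK, Matrix.mul_sub]; abel
  have hM : (1 - C2 * X * L) * Mhs = 1 := by
    rw [hMhs, Matrix.mul_add, ← Matrix.mul_assoc, hC, Matrix.mul_one]; abel
  have hinv : Mhs⁻¹ = 1 - C2 * X * L := Matrix.inv_eq_left_inv hM
  refine ⟨(Matrix.isUnit_iff_isUnit_det _).2 (Matrix.isUnit_det_of_left_inverse hM), hinv, ?_⟩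
  rw [hinv, hNhs, Matrix.mul_add, ← Matrix.mul_assoc, hC, Matrix.mul_add, Matrix.sub_mul,
    Matrix.one_mul, ← Matrix.mul_assoc (C2 * X) L D22]
  abel
end
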